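/- Let μ be a probability mass function on T₁ with 0 < β := Σ_τ μ(τ)·deg(τ) < ∞, let η₁ be the law on T₁ with degree distribution Q and i.i.d. marks, where Q has finite nonzero mean, assume μ is absolutely continuous with respect to η₁, and assume μ̄^{1,o} is symmetric (μ̄^{1,o}((a,y),(b,y′)) = μ̄^{1,o}((b,y′),(a,y)) for all a,b ∈ 𝒳, y,y′ ∈ 𝒴). Then, as an identity of elements of [0,∞], H(μ ‖ η₁) − (β/2)·H(μ̄^{1,o} ‖ η̄₁^{1,o}) = (1/2)·( H(μ ‖ μ̌) + H(μ ‖ μ̂) ); here H(μ̄^{1,o} ‖ η̄₁^{1,o}) is finite, H(μ ‖ η₁) = ∞ if and only if the right-hand side is ∞, and when H(μ ‖ η₁) < ∞ the identity holds in ℝ. -/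

import Mathlib

open scoped BigOperators ENNReal Classical

noncomputable section

/-- Depth-1 rooted marked trees: the root mark together with the multiset of
(vertex mark, edge mark toward the root, edge mark at the root) triples of the
neighbors of the root. -/
abbrev T1 (𝒳 𝒴 : Type) : Type := 𝒳 × Multiset (𝒳 × 𝒴 × 𝒴)

section Defs

variable {𝒳 𝒴 : Type} [Fintype 𝒳] [Fintype 𝒴] [DecidableEq 𝒳] [DecidableEq 𝒴]

/-- Degree of the root of a depth-1 tree. -/
def deg (τ : T1 𝒳 𝒴) : ℕ := Multiset.card τ.2

/-- Symmetrized edge-mark distribution `ξ̄(y, y') = (ξ(y, y') + ξ(y', y)) / 2`. -/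
def xiBar (ξ : 𝒴 × 𝒴 → ℝ) (y y' : 𝒴) : ℝ := (ξ (y, y') + ξ (y', y)) / 2

/-- Multinomial coefficient `card m ! / ∏ₛ (multiplicity of s in m)!`. -/
def ordCoeff (m : Multiset (𝒳 × 𝒴 × 𝒴)) : ℝ :=
  (Nat.factorial (Multiset.card m) : ℝ) /
    ∏ s ∈ m.toFinset, (Nat.factorial (m.count s) : ℝ)

/-- The law `η₁` on `T1` with root-degree distribution `Q` and i.i.d. marks:
`η₁ (x, m) = ν x · Q (card m) · (card m)!/∏ₛ count s !· ∏_{(a,y,y') ∈ m} ν a · ξ̄ y y'`. -/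
def eta1 (ν : 𝒳 → ℝ) (ξ : 𝒴 × 𝒴 → ℝ) (Q : ℕ → ℝ) (τ : T1 𝒳 𝒴) : ℝ :=
  ν τ.1 * Q (Multiset.card τ.2) * ordCoeff τ.2 *
    (τ.2.map fun p => ν p.1 * xiBar ξ p.2.1 p.2.2).prod

/-- Mean root degree `β = ∑_τ μ τ · deg τ`. -/
def meanDeg (μ : T1 𝒳 𝒴 → ℝ) : ℝ := ∑' τ : T1 𝒳 𝒴, μ τ * (deg τ : ℝ)

/-- The neighbor–root marginal `μ̄^{1,o}`:
`μ̄^{1,o} ((a,y), (b,y')) = (1/β) ∑_{m} μ (b, m) · (multiplicity of (a,y,y') in m)`. -/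
def nbrRoot (μ : T1 𝒳 𝒴 → ℝ) (p : (𝒳 × 𝒴) × (𝒳 × 𝒴)) : ℝ :=
  (1 / meanDeg μ) *
    ∑' m : Multiset (𝒳 × 𝒴 × 𝒴), μ (p.2.1, m) * (m.count (p.1.1, p.1.2, p.2.2) : ℝ)

/-- First marginal `μ̄¹` of `μ̄^{1,o}`. -/
def marg1 (μ : T1 𝒳 𝒴 → ℝ) (u : 𝒳 × 𝒴) : ℝ := ∑ v : 𝒳 × 𝒴, nbrRoot μ (u, v)

/-- Second marginal `μ̄ᵒ` of `μ̄^{1,o}`. -/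
def margO (μ : T1 𝒳 𝒴 → ℝ) (v : 𝒳 × 𝒴) : ℝ := ∑ u : 𝒳 × 𝒴, nbrRoot μ (u, v)

/-- Conditional law `μ̄^{1|o} (u | v) = μ̄^{1,o}(u,v) / μ̄ᵒ(v)` (and `0` if `μ̄ᵒ(v) = 0`). -/
def condNbr (μ : T1 𝒳 𝒴 → ℝ) (u v : 𝒳 × 𝒴) : ℝ :=
  if 0 < margO μ v then nbrRoot μ (u, v) / margO μ v else 0

/-- `μ̌ (x, m) = η₁ (x, m) · ∏_{(a,y,y') ∈ m} μ̄¹(a,y) / η̄₁¹(a,y)` (product with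
multiplicity; in Lean a ratio with zero denominator is `0`). -/
def muCheck (ν : 𝒳 → ℝ) (ξ : 𝒴 × 𝒴 → ℝ) (Q : ℕ → ℝ) (μ : T1 𝒳 𝒴 → ℝ) (τ : T1 𝒳 𝒴) : ℝ :=
  eta1 ν ξ Q τ *
    (τ.2.map fun p => marg1 μ (p.1, p.2.1) / marg1 (eta1 ν ξ Q) (p.1, p.2.1)).prod

/-- `μ̂ (x, m) = η₁ (x, m) · ∏_{(a,y,y') ∈ m} μ̄^{1|o}((a,y)|(x,y')) / η̄₁^{1|o}((a,y)|(x,y'))`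
(product with multiplicity; a ratio with zero denominator is `0`). -/
def muHat (ν : 𝒳 → ℝ) (ξ : 𝒴 × 𝒴 → ℝ) (Q : ℕ → ℝ) (μ : T1 𝒳 𝒴 → ℝ) (τ : T1 𝒳 𝒴) : ℝ :=
  eta1 ν ξ Q τ *
    (τ.2.map fun p =>
      condNbr μ (p.1, p.2.1) (τ.1, p.2.2) /
        condNbr (eta1 ν ξ Q) (p.1, p.2.1) (τ.1, p.2.2)).prod

end Defs

/-- Relative entropy `H(p ‖ q) = ∑ₛ p s * log (p s / q s)` of probability mass
functions, with value `∞` when `p` is not absolutely continuous with respect to `q`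
(or the defining series diverges); `0·log 0 = 0` is automatic since `Real.log 0 = 0`. -/
def relEnt {S : Type*} (p q : S → ℝ) : ℝ≥0∞ :=
  if (∀ s, q s = 0 → p s = 0) ∧ Summable (fun s => p s * Real.log (p s / q s)) then
    ENNReal.ofReal (∑' s, p s * Real.log (p s / q s))
  else ⊤

/-!
Both `μ̌` and `μ̂` tilt `η₁` by a product of edge weights over the neighbours of the root. Tilting
by weights `g` shifts `H(μ ‖ ·)` by the mean of `∑ log g` under `μ`, which the size-biasing formula
`E_μ [∑ L] = β ∑ p, μ̄^{1,o} p * L p` turns into `β` times an average over `μ̄^{1,o}`. The weights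
of `μ̌` and `μ̂` are the marginal and the conditional factor of `μ̄^{1,o} / η̄₁^{1,o}`, so the chain
rule, together with symmetry to exchange the two marginals, sums the two shifts to
`β * H(μ̄^{1,o} ‖ η̄₁^{1,o})`.

Since `relEnt` truncates negative sums to `0`, each tilted law also has to be a subprobability for
Gibbs' inequality to apply; this holds because a product tilt of a law with i.i.d. marks is again
such a law, with a subprobability as its mark weights.
-/

section RelativeEntropy

variable {S : Type*} {p q : S → ℝ}

/-- The summand of the relative entropy `H(p ‖ q)`. -/
def relEntTerm (p q : S → ℝ) (s : S) : ℝ := p s * Real.log (p s / q s)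

lemma relEnt_ne_top_iff_summable (habs : ∀ s, q s = 0 → p s = 0) :
    relEnt p q ≠ ⊤ ↔ Summable (relEntTerm p q) := by
  refine ⟨fun h => ?_, fun hs => ?_⟩
  · by_contra hs
    exact h (if_neg fun hcond => hs hcond.2)
  · rw [relEnt, if_pos ⟨habs, hs⟩]
    exact ENNReal.ofReal_ne_top

/-- Subprobability mass functions, the natural domain of the second argument in Gibbs'
inequality. -/
structure IsSubPMF (q : S → ℝ) : Prop where
  nonneg : ∀ s, 0 ≤ q s
  summable : Summable q
  tsum_le_one : ∑' s, q s ≤ 1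

lemma isSubPMF_of_mem_stdSimplex [Fintype S] (hq : q ∈ stdSimplex ℝ S) : IsSubPMF q :=
  ⟨hq.1, (hasSum_fintype q).summable, (tsum_fintype q).trans_le hq.2.le⟩

lemma sub_le_relEntTerm {s : S} (hp : 0 ≤ p s) (hq : 0 ≤ q s) (habs : q s = 0 → p s = 0) :
    p s - q s ≤ relEntTerm p q s := by
  rcases hq.eq_or_lt with hq0 | hqpos
  · simp [relEntTerm, habs hq0.symm, ← hq0]
  · have hkl : 0 ≤ q s * InformationTheory.klFun (p s / q s) :=
      mul_nonneg hq (InformationTheory.klFun_nonneg (div_nonneg hp hq))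
    have hexpand : q s * InformationTheory.klFun (p s / q s) = relEntTerm p q s + q s - p s := by
      rw [InformationTheory.klFun_apply, relEntTerm]
      field_simp
    linarith

lemma tsum_relEntTerm_nonneg (hp0 : ∀ s, 0 ≤ p s) (hp1 : HasSum p 1) (hq : IsSubPMF q)
    (habs : ∀ s, q s = 0 → p s = 0) (hs : Summable (relEntTerm p q)) :
    0 ≤ ∑' s, relEntTerm p q s :=
  calc (0 : ℝ) ≤ 1 - ∑' s, q s := sub_nonneg.2 hq.tsum_le_one
    _ = ∑' s, (p s - q s) := by rw [hp1.summable.tsum_sub hq.summable, hp1.tsum_eq]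
    _ ≤ ∑' s, relEntTerm p q s := (hp1.summable.sub hq.summable).tsum_le_tsum
      (fun s => sub_le_relEntTerm (hp0 s) (hq.nonneg s) (habs s)) hs

lemma toReal_relEnt (hp0 : ∀ s, 0 ≤ p s) (hp1 : HasSum p 1) (hq : IsSubPMF q)
    (habs : ∀ s, q s = 0 → p s = 0) (hs : Summable (relEntTerm p q)) :
    (relEnt p q).toReal = ∑' s, relEntTerm p q s := by
  have h := ENNReal.toReal_ofReal (tsum_relEntTerm_nonneg hp0 hp1 hq habs hs)
  rwa [relEnt, if_pos ⟨habs, hs⟩]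

end RelativeEntropy

lemma hasSum_prod_of_fintype {X M A : Type*} [Fintype X] [AddCommMonoid A] [TopologicalSpace A]
    [ContinuousAdd A] {f : X × M → A} {a : X → A} (h : ∀ x, HasSum (fun m => f (x, m)) (a x)) :
    HasSum f (∑ x, a x) := by
  have hslice (x : X) : HasSum (fun τ : X × M => if τ.1 = x then f τ else 0) (a x) := by
    rw [← (Prod.mk_right_injective x).hasSum_iff]
    · simpa [Function.comp_def] using h x
    · rintro ⟨y, m⟩ hy
      exact if_neg fun hyx => hy ⟨m, by rw [← hyx]⟩
  simpa using hasSum_sum (s := Finset.univ) fun x _ => hslice x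

section Multiset

variable {S : Type*} [DecidableEq S]

lemma countPerms_cons_mul_count (s : S) (m : Multiset S) :
    (s ::ₘ m).countPerms * (s ::ₘ m).count s = (m.card + 1) * m.countPerms := by
  have hfilter : (s ::ₘ m).filter (s ≠ ·) = m.filter (s ≠ ·) :=
    Multiset.filter_cons_of_neg _ (by simp)
  rw [Multiset.countPerms_filter_ne s (s ::ₘ m), Multiset.countPerms_filter_ne s m, hfilter,
    Multiset.count_cons_self, Multiset.card_cons, mul_right_comm, ← Nat.add_one_mul_choose_eq,
    mul_assoc]

lemma sum_map_eq_sum_count_mul [Fintype S] {R : Type*} [NonAssocSemiring R] (m : Multiset S)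
    (L : S → R) : (m.map L).sum = ∑ s, m.count s * L s := by
  rw [Finset.sum_multiset_map_count]
  simp only [nsmul_eq_mul]
  refine Finset.sum_subset (Finset.subset_univ _) fun s _ hs => ?_
  rw [Multiset.count_eq_zero_of_notMem (mt Multiset.mem_toFinset.2 hs), Nat.cast_zero, zero_mul]

lemma hasSum_countPerms_mul_prod_map [Fintype S] {w : S → ℝ} (hw : ∀ s, 0 ≤ w s) {c : ℕ → ℝ}
    (hc : ∀ k, 0 ≤ c k) {a : ℝ} (h : HasSum (fun k => c k * (∑ s, w s) ^ k) a) :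
    HasSum (fun m : Multiset S => c m.card * (m.countPerms * (m.map w).prod)) a := by
  set F := fun m : Multiset S => c m.card * (m.countPerms * (m.map w).prod) with hF
  have hF0 (m : Multiset S) : 0 ≤ F m :=
    mul_nonneg (hc _) (mul_nonneg (Nat.cast_nonneg _)
      (Multiset.prod_nonneg (Multiset.forall_mem_map_iff.2 fun s _ => hw s)))
  let e : (Σ k, Sym S k) ≃ Multiset S := Equiv.sigmaFiberEquiv Multiset.card
  have hfiber (k : ℕ) : HasSum (fun m : Sym S k => (F ∘ e) ⟨k, m⟩) (c k * (∑ s, w s) ^ k) := by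
    have hterm (m : Sym S k) : (F ∘ e) ⟨k, m⟩ = c k * (m.1.countPerms * (m.1.map w).prod) := by
      change F m.1 = _
      simp only [hF, m.2]
    simp_rw [hterm, Finset.sum_pow, Finset.sym_univ, Finset.mul_sum]
    exact hasSum_fintype _
  have hsummable : Summable (F ∘ e) :=
    (summable_sigma_of_nonneg fun _ => hF0 _).2 ⟨fun k => (hfiber k).summable,
      h.summable.congr fun k => (hfiber k).tsum_eq.symm⟩
  exact e.hasSum_iff.1 (h.sigma_of_hasSum hfiber hsummable)

end Multiset

section IIDLaw

variable {X S : Type*} [DecidableEq S]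

/-- The law of a root mark `x` of law `ν`, together with a multiset whose size has law `Q` and whose
elements are i.i.d. with law `w x`. The weights `w x` are not required to sum to one, so that
product tilts of such a law are of the same form. -/
def iidLaw (ν : X → ℝ) (Q : ℕ → ℝ) (w : X → S → ℝ) (τ : X × Multiset S) : ℝ :=
  ν τ.1 * (Q τ.2.card * (τ.2.countPerms * (τ.2.map (w τ.1)).prod))

variable [Fintype S] {ν : X → ℝ} {Q : ℕ → ℝ} {w : X → S → ℝ}

lemma isSubPMF_iidLaw [Fintype X] (hν : ν ∈ stdSimplex ℝ X) (hQ : IsSubPMF Q)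
    (hw : ∀ x s, 0 ≤ w x s) (hw1 : ∀ x, ∑ s, w x s ≤ 1) : IsSubPMF (iidLaw ν Q w) := by
  have hpow (x : X) (k : ℕ) : Q k * (∑ s, w x s) ^ k ≤ Q k :=
    mul_le_of_le_one_right (hQ.nonneg k)
      (pow_le_one₀ (Finset.sum_nonneg fun s _ => hw x s) (hw1 x))
  have hsummable (x : X) : Summable fun k => Q k * (∑ s, w x s) ^ k :=
    hQ.summable.of_nonneg_of_le (fun k => mul_nonneg (hQ.nonneg k)
      (pow_nonneg (Finset.sum_nonneg fun s _ => hw x s) k)) (hpow x)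
  have hsum : HasSum (iidLaw ν Q w) (∑ x, ν x * ∑' k, Q k * (∑ s, w x s) ^ k) :=
    hasSum_prod_of_fintype fun x =>
      (hasSum_countPerms_mul_prod_map (hw x) hQ.nonneg (hsummable x).hasSum).mul_left (ν x)
  refine ⟨fun τ => ?_, hsum.summable, ?_⟩
  · exact mul_nonneg (hν.1 _) (mul_nonneg (hQ.nonneg _) (mul_nonneg (Nat.cast_nonneg _)
      (Multiset.prod_nonneg (Multiset.forall_mem_map_iff.2 fun s _ => hw τ.1 s))))
  · calc ∑' τ, iidLaw ν Q w τ = ∑ x, ν x * ∑' k, Q k * (∑ s, w x s) ^ k := hsum.tsum_eq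
      _ ≤ ∑ x, ν x := Finset.sum_le_sum fun x _ => mul_le_of_le_one_right (hν.1 x)
        (((hsummable x).tsum_le_tsum (hpow x) hQ.summable).trans hQ.tsum_le_one)
      _ = 1 := hν.2

lemma hasSum_iidLaw_mul_count {x : X} (hw : w x ∈ stdSimplex ℝ S) (hQ : ∀ k, 0 ≤ Q k) {q : ℝ}
    (hq : HasSum (fun k : ℕ => k * Q k) q) (s : S) :
    HasSum (fun m => iidLaw ν Q w (x, m) * m.count s) (ν x * w x s * q) := by
  -- Only multisets containing `s` contribute; removing one copy of `s` leaves an i.i.d. multiset.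
  have hinj : Function.Injective (s ::ₘ ·) := fun _ _ h => (Multiset.cons_inj_right s).1 h
  rw [← hinj.hasSum_iff]
  · have hshift : HasSum (fun k : ℕ => ((k : ℝ) + 1) * Q (k + 1)) q := by
      simpa using (hasSum_nat_add_iff' 1).2 hq
    have hremove := hasSum_countPerms_mul_prod_map hw.1
      (c := fun k => ((k : ℝ) + 1) * Q (k + 1)) (fun k => mul_nonneg (by positivity) (hQ _))
      (by simpa [hw.2] using hshift)
    refine (hremove.mul_left (ν x * w x s)).congr_fun fun m => ?_
    have hcons : ((s ::ₘ m).countPerms : ℝ) * (s ::ₘ m).count s = (m.card + 1) * m.countPerms :=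
      mod_cast countPerms_cons_mul_count s m
    simp only [iidLaw, Function.comp_apply, Multiset.map_cons, Multiset.prod_cons,
      Multiset.card_cons]
    linear_combination (ν x * w x s * Q (m.card + 1) * (m.map (w x)).prod) * hcons
  · intro m hm
    have hs : s ∉ m := fun hs => hm ⟨m.erase s, Multiset.cons_erase hs⟩
    simp [Multiset.count_eq_zero_of_notMem hs]

lemma hasSum_iidLaw_mul_card [Fintype X] (hν : ∑ x, ν x = 1) (hw : ∀ x, w x ∈ stdSimplex ℝ S)
    (hQ : ∀ k, 0 ≤ Q k) {q : ℝ} (hq : HasSum (fun k : ℕ => k * Q k) q) :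
    HasSum (fun τ : X × Multiset S => iidLaw ν Q w τ * τ.2.card) q := by
  have hfiber (x : X) : HasSum (fun m => iidLaw ν Q w (x, m) * m.card) (ν x * q) := by
    have hcard (m : Multiset S) : (m.card : ℝ) = ∑ s, (m.count s : ℝ) :=
      mod_cast (Multiset.sum_count_eq_card fun s _ => Finset.mem_univ s).symm
    have h := hasSum_sum (s := Finset.univ) fun s _ =>
      hasSum_iidLaw_mul_count (ν := ν) (hw x) hQ hq s
    rw [← Finset.sum_mul, ← Finset.mul_sum, (hw x).2, mul_one] at h
    simpa only [hcard, Finset.mul_sum] using h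
  have h := hasSum_prod_of_fintype (f := fun τ => iidLaw ν Q w τ * τ.2.card) hfiber
  rwa [← Finset.sum_mul, hν, one_mul] at h

end IIDLaw

section SizeBiasing

variable {𝒳 𝒴 : Type}

/-- The marks `((a, y), (x, y'))` carried by the edge from a neighbour `(a, y, y')` to a root with
mark `x`, as an argument of `nbrRoot`. -/
def edgeMarks : 𝒳 × (𝒳 × 𝒴 × 𝒴) ≃ (𝒳 × 𝒴) × (𝒳 × 𝒴) where
  toFun e := ((e.2.1, e.2.2.1), (e.1, e.2.2.2))
  invFun p := (p.2.1, (p.1.1, p.1.2, p.2.2))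
  left_inv _ := rfl
  right_inv _ := rfl

/-- The tilt of `η` by the product of the weights `g` of the edges at the root. Both `muCheck` and
`muHat` are of this form. -/
def edgeTilt (η : T1 𝒳 𝒴 → ℝ) (g : (𝒳 × 𝒴) × (𝒳 × 𝒴) → ℝ) (τ : T1 𝒳 𝒴) : ℝ :=
  η τ * (τ.2.map fun s => g (edgeMarks (τ.1, s))).prod

/-- Nonnegative weights on trees with finite nonzero mean degree; their size-biased marginal
`nbrRoot` is a genuine probability mass function. -/
structure IsSizeBiasable (μ : T1 𝒳 𝒴 → ℝ) : Prop where
  nonneg : ∀ τ, 0 ≤ μ τ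
  summable : Summable fun τ => μ τ * (deg τ : ℝ)
  meanDeg_pos : 0 < meanDeg μ

variable {μ η : T1 𝒳 𝒴 → ℝ} {g : (𝒳 × 𝒴) × (𝒳 × 𝒴) → ℝ}

lemma relEntTerm_edgeTilt {τ : T1 𝒳 𝒴} (habs : η τ = 0 → μ τ = 0)
    (hg : μ τ ≠ 0 → ∀ s ∈ τ.2, g (edgeMarks (τ.1, s)) ≠ 0) :
    relEntTerm μ (edgeTilt η g) τ = relEntTerm μ η τ -
      μ τ * (τ.2.map fun s => Real.log (g (edgeMarks (τ.1, s)))).sum := by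
  by_cases hμ : μ τ = 0
  · simp [relEntTerm, hμ]
  have hη : η τ ≠ 0 := mt habs hμ
  have hw : ∀ b ∈ τ.2.map (fun s => g (edgeMarks (τ.1, s))), b ≠ 0 :=
    Multiset.forall_mem_map_iff.2 (hg hμ)
  have hprod : (τ.2.map fun s => g (edgeMarks (τ.1, s))).prod ≠ 0 :=
    Multiset.prod_ne_zero fun h0 => hw 0 h0 rfl
  have hlog := Real.log_multiset_prod hw
  rw [Multiset.map_map, Function.comp_def] at hlog
  rw [relEntTerm, relEntTerm, edgeTilt, Real.log_div hμ (mul_ne_zero hη hprod),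
    Real.log_mul hη hprod, Real.log_div hμ hη, hlog]
  ring

variable [DecidableEq 𝒳] [DecidableEq 𝒴]

lemma summable_mul_count (hμ : Summable fun τ => μ τ * (deg τ : ℝ)) (x : 𝒳)
    (s : 𝒳 × 𝒴 × 𝒴) : Summable fun m => μ (x, m) * (m.count s : ℝ) := by
  refine .of_norm_bounded (hμ.comp_injective (Prod.mk_right_injective x)).norm fun m => ?_
  simp only [Function.comp_apply, norm_mul, Real.norm_natCast, deg]
  exact mul_le_mul_of_nonneg_left (mod_cast Multiset.count_le_card s m) (norm_nonneg _)

lemma nbrRoot_nonneg (hμ : ∀ τ, 0 ≤ μ τ) (p : (𝒳 × 𝒴) × (𝒳 × 𝒴)) : 0 ≤ nbrRoot μ p :=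
  mul_nonneg (one_div_nonneg.2 (tsum_nonneg fun _ => mul_nonneg (hμ _) (Nat.cast_nonneg _)))
    (tsum_nonneg fun _ => mul_nonneg (hμ _) (Nat.cast_nonneg _))

lemma nbrRoot_pos_of_nbrRoot_pos (hη : ∀ τ, 0 ≤ η τ)
    (habs : ∀ p, nbrRoot η p = 0 → nbrRoot μ p = 0) {p : (𝒳 × 𝒴) × (𝒳 × 𝒴)}
    (h : 0 < nbrRoot μ p) : 0 < nbrRoot η p :=
  (nbrRoot_nonneg hη p).lt_of_ne' (mt (habs p) h.ne')

lemma IsSizeBiasable.nbrRoot_edgeMarks_pos (hμ : IsSizeBiasable μ) {τ : T1 𝒳 𝒴} (hτ : μ τ ≠ 0)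
    {s : 𝒳 × 𝒴 × 𝒴} (hs : s ∈ τ.2) : 0 < nbrRoot μ (edgeMarks (τ.1, s)) := by
  refine mul_pos (one_div_pos.2 hμ.meanDeg_pos) ((summable_mul_count hμ.summable τ.1 s).tsum_pos
    (fun _ => mul_nonneg (hμ.nonneg _) (Nat.cast_nonneg _)) τ.2 ?_)
  exact mul_pos ((hμ.nonneg τ).lt_of_ne' hτ) (mod_cast Multiset.count_pos.2 hs)

lemma exists_mem_of_nbrRoot_edgeMarks_ne_zero {x : 𝒳} {s : 𝒳 × 𝒴 × 𝒴}
    (h : nbrRoot μ (edgeMarks (x, s)) ≠ 0) : ∃ m, μ (x, m) ≠ 0 ∧ s ∈ m := by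
  by_contra! hall
  refine h (mul_eq_zero_of_right _ ?_)
  rw [tsum_congr (g := fun _ => 0) fun m => ?_, tsum_zero]
  by_cases hm : μ (x, m) = 0
  · exact mul_eq_zero_of_left hm _
  · exact mul_eq_zero_of_right _ (mod_cast Multiset.count_eq_zero.2 (hall m hm))

lemma IsSizeBiasable.nbrRoot_eq_zero (hη : IsSizeBiasable η) (habs : ∀ τ, η τ = 0 → μ τ = 0)
    (p : (𝒳 × 𝒴) × (𝒳 × 𝒴)) (hp : nbrRoot η p = 0) : nbrRoot μ p = 0 := by
  by_contra hne
  obtain ⟨⟨x, s⟩, rfl⟩ := edgeMarks.surjective p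
  obtain ⟨m, hm, hs⟩ := exists_mem_of_nbrRoot_edgeMarks_ne_zero hne
  exact (hη.nbrRoot_edgeMarks_pos (mt (habs (x, m)) hm) hs).ne' hp

lemma IsSizeBiasable.relEnt_nbrRoot_ne_top [Finite 𝒳] [Finite 𝒴] (hη : IsSizeBiasable η)
    (habs : ∀ τ, η τ = 0 → μ τ = 0) : relEnt (nbrRoot μ) (nbrRoot η) ≠ ⊤ :=
  (relEnt_ne_top_iff_summable (hη.nbrRoot_eq_zero habs)).2 .of_finite

lemma hasSum_mul_sum_map_edgeMarks [Fintype 𝒳] [Fintype 𝒴]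
    (hμ : Summable fun τ => μ τ * (deg τ : ℝ)) (hβ : meanDeg μ ≠ 0) (L : (𝒳 × 𝒴) × (𝒳 × 𝒴) → ℝ) :
    HasSum (fun τ => μ τ * (τ.2.map fun s => L (edgeMarks (τ.1, s))).sum)
      (meanDeg μ * ∑ p, nbrRoot μ p * L p) := by
  have hcount (x : 𝒳) (s : 𝒳 × 𝒴 × 𝒴) : HasSum (fun m => μ (x, m) * (m.count s : ℝ))
      (meanDeg μ * nbrRoot μ (edgeMarks (x, s))) := by
    rw [nbrRoot, ← mul_assoc, mul_one_div_cancel hβ, one_mul]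
    exact (summable_mul_count hμ x s).hasSum
  have hslice (x : 𝒳) : HasSum
      (fun m => μ (x, m) * (m.map fun s => L (edgeMarks (x, s))).sum)
      (∑ s, meanDeg μ * nbrRoot μ (edgeMarks (x, s)) * L (edgeMarks (x, s))) := by
    simp_rw [sum_map_eq_sum_count_mul, Finset.mul_sum, ← mul_assoc]
    exact hasSum_sum fun s _ => (hcount x s).mul_right _
  rw [← edgeMarks.sum_comp, Fintype.sum_prod_type]
  simp_rw [Finset.mul_sum, ← mul_assoc]
  exact hasSum_prod_of_fintype hslice

lemma IsSizeBiasable.nbrRoot_mem_stdSimplex [Fintype 𝒳] [Fintype 𝒴] (hμ : IsSizeBiasable μ) :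
    nbrRoot μ ∈ stdSimplex ℝ ((𝒳 × 𝒴) × (𝒳 × 𝒴)) := by
  refine ⟨nbrRoot_nonneg hμ.nonneg, mul_left_cancel₀ hμ.meanDeg_pos.ne' ?_⟩
  have hone := (hasSum_mul_sum_map_edgeMarks hμ.summable hμ.meanDeg_pos.ne' fun _ => 1).tsum_eq
  simp only [Multiset.map_const', Multiset.sum_replicate, nsmul_eq_mul, mul_one] at hone
  rw [← hone, mul_one]
  rfl

section EdgeTilt

variable (hμ : IsSizeBiasable μ) (habs : ∀ τ, η τ = 0 → μ τ = 0)
  (hg : ∀ p, 0 < nbrRoot μ p → g p ≠ 0)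

include hμ habs hg

lemma eq_zero_of_edgeTilt_eq_zero (τ : T1 𝒳 𝒴) (h : edgeTilt η g τ = 0) : μ τ = 0 := by
  by_contra hτ
  have hprod := (mul_eq_zero.1 h).resolve_left (mt (habs τ) hτ)
  obtain ⟨s, hs, hgs⟩ := Multiset.mem_map.1 (Multiset.prod_eq_zero_iff.1 hprod)
  exact hg _ (hμ.nbrRoot_edgeMarks_pos hτ hs) hgs

lemma hasSum_relEntTerm_sub_relEntTerm_edgeTilt [Fintype 𝒳] [Fintype 𝒴] :
    HasSum (fun τ => relEntTerm μ η τ - relEntTerm μ (edgeTilt η g) τ)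
      (meanDeg μ * ∑ p, nbrRoot μ p * Real.log (g p)) := by
  refine (hasSum_mul_sum_map_edgeMarks hμ.summable hμ.meanDeg_pos.ne' _).congr_fun fun τ => ?_
  rw [relEntTerm_edgeTilt (habs τ) fun hτ s hs => hg _ (hμ.nbrRoot_edgeMarks_pos hτ hs),
    sub_sub_cancel]

lemma summable_relEntTerm_edgeTilt_iff [Finite 𝒳] [Finite 𝒴] :
    Summable (relEntTerm μ (edgeTilt η g)) ↔ Summable (relEntTerm μ η) := by
  cases nonempty_fintype 𝒳
  cases nonempty_fintype 𝒴
  have hdiff := (hasSum_relEntTerm_sub_relEntTerm_edgeTilt hμ habs hg).summable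
  exact ⟨fun h => by simpa using hdiff.add h, fun h => by simpa using h.sub hdiff⟩

lemma relEnt_edgeTilt_eq_top_iff [Finite 𝒳] [Finite 𝒴] :
    relEnt μ (edgeTilt η g) = ⊤ ↔ relEnt μ η = ⊤ :=
  not_iff_not.1 <| by
    rw [← ne_eq, ← ne_eq, relEnt_ne_top_iff_summable habs,
      relEnt_ne_top_iff_summable (eq_zero_of_edgeTilt_eq_zero hμ habs hg),
      summable_relEntTerm_edgeTilt_iff hμ habs hg]

lemma toReal_relEnt_edgeTilt [Fintype 𝒳] [Fintype 𝒴] (hμ1 : HasSum μ 1)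
    (hη : IsSubPMF η) (htilt : IsSubPMF (edgeTilt η g)) (hfin : relEnt μ η ≠ ⊤) :
    (relEnt μ (edgeTilt η g)).toReal =
      (relEnt μ η).toReal - meanDeg μ * ∑ p, nbrRoot μ p * Real.log (g p) := by
  have hs := (relEnt_ne_top_iff_summable habs).1 hfin
  have hs' := (summable_relEntTerm_edgeTilt_iff hμ habs hg).2 hs
  rw [toReal_relEnt hμ.nonneg hμ1 hη habs hs,
    toReal_relEnt hμ.nonneg hμ1 htilt (eq_zero_of_edgeTilt_eq_zero hμ habs hg) hs',
    ← (hasSum_relEntTerm_sub_relEntTerm_edgeTilt hμ habs hg).tsum_eq, hs.tsum_sub hs',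
    sub_sub_cancel]

end EdgeTilt

end SizeBiasing

section ChainRule

variable {𝒳 𝒴 : Type} [Fintype 𝒳] [Fintype 𝒴] [DecidableEq 𝒳] [DecidableEq 𝒴]
  {μ η : T1 𝒳 𝒴 → ℝ}

/-- The edge weight `μ̄¹(u) / η̄¹(u)` of the tilt `μ̌`, at an edge with marks `(u, v)`. -/
def marginalRatio (μ η : T1 𝒳 𝒴 → ℝ) (p : (𝒳 × 𝒴) × (𝒳 × 𝒴)) : ℝ := marg1 μ p.1 / marg1 η p.1

/-- The edge weight `μ̄^{1|o}(u | v) / η̄^{1|o}(u | v)` of the tilt `μ̂`, at an edge with marks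
`(u, v)`. -/
def condRatio (μ η : T1 𝒳 𝒴 → ℝ) (p : (𝒳 × 𝒴) × (𝒳 × 𝒴)) : ℝ :=
  condNbr μ p.1 p.2 / condNbr η p.1 p.2

lemma muCheck_eq_edgeTilt (ν : 𝒳 → ℝ) (ξ : 𝒴 × 𝒴 → ℝ) (Q : ℕ → ℝ) (μ : T1 𝒳 𝒴 → ℝ) :
    muCheck ν ξ Q μ = edgeTilt (eta1 ν ξ Q) (marginalRatio μ (eta1 ν ξ Q)) := rfl

lemma muHat_eq_edgeTilt (ν : 𝒳 → ℝ) (ξ : 𝒴 × 𝒴 → ℝ) (Q : ℕ → ℝ) (μ : T1 𝒳 𝒴 → ℝ) :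
    muHat ν ξ Q μ = edgeTilt (eta1 ν ξ Q) (condRatio μ (eta1 ν ξ Q)) := rfl

lemma marg1_nonneg (hμ : ∀ τ, 0 ≤ μ τ) (u : 𝒳 × 𝒴) : 0 ≤ marg1 μ u :=
  Finset.sum_nonneg fun _ _ => nbrRoot_nonneg hμ _

lemma condNbr_nonneg (hμ : ∀ τ, 0 ≤ μ τ) (u v : 𝒳 × 𝒴) : 0 ≤ condNbr μ u v := by
  unfold condNbr
  split_ifs with h
  · exact div_nonneg (nbrRoot_nonneg hμ _) h.le
  · exact le_rfl

lemma sum_condNbr_le_one (v : 𝒳 × 𝒴) : ∑ u, condNbr μ u v ≤ 1 := by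
  unfold condNbr
  split_ifs
  · rw [← Finset.sum_div]
    exact div_self_le_one _
  · simp

lemma marg1_pos (hμ : ∀ τ, 0 ≤ μ τ) {u v : 𝒳 × 𝒴} (h : 0 < nbrRoot μ (u, v)) : 0 < marg1 μ u :=
  Finset.sum_pos' (fun _ _ => nbrRoot_nonneg hμ _) ⟨v, Finset.mem_univ v, h⟩

lemma margO_pos (hμ : ∀ τ, 0 ≤ μ τ) {u v : 𝒳 × 𝒴} (h : 0 < nbrRoot μ (u, v)) : 0 < margO μ v :=
  Finset.sum_pos' (fun _ _ => nbrRoot_nonneg hμ _) ⟨u, Finset.mem_univ u, h⟩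

lemma condNbr_mul_margO (hμ : ∀ τ, 0 ≤ μ τ) (u v : 𝒳 × 𝒴) :
    condNbr μ u v * margO μ v = nbrRoot μ (u, v) := by
  unfold condNbr
  split_ifs with h
  · exact div_mul_cancel₀ _ h.ne'
  · rw [zero_mul]
    exact ((nbrRoot_nonneg hμ _).eq_or_lt.resolve_right fun hpos => h (margO_pos hμ hpos))

lemma condNbr_ne_zero (hμ : ∀ τ, 0 ≤ μ τ) {u v : 𝒳 × 𝒴} (h : 0 < nbrRoot μ (u, v)) :
    condNbr μ u v ≠ 0 :=
  left_ne_zero_of_mul (condNbr_mul_margO hμ u v ▸ h.ne')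

lemma marg1_eq_margO (hsym : ∀ u v, nbrRoot μ (u, v) = nbrRoot μ (v, u)) :
    marg1 μ = margO μ :=
  funext fun u => Finset.sum_congr rfl fun v _ => hsym u v

section Ratios

variable (hμ : ∀ τ, 0 ≤ μ τ) (hη : ∀ τ, 0 ≤ η τ) (habs : ∀ p, nbrRoot η p = 0 → nbrRoot μ p = 0)

include hμ hη habs

lemma marginalRatio_ne_zero (p : (𝒳 × 𝒴) × (𝒳 × 𝒴)) (h : 0 < nbrRoot μ p) :
    marginalRatio μ η p ≠ 0 :=
  div_ne_zero (marg1_pos hμ h).ne' (marg1_pos hη (nbrRoot_pos_of_nbrRoot_pos hη habs h)).ne'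

lemma condRatio_ne_zero (p : (𝒳 × 𝒴) × (𝒳 × 𝒴)) (h : 0 < nbrRoot μ p) :
    condRatio μ η p ≠ 0 :=
  div_ne_zero (condNbr_ne_zero hμ h)
    (condNbr_ne_zero hη (nbrRoot_pos_of_nbrRoot_pos hη habs h))

lemma relEntTerm_nbrRoot_eq (u v : 𝒳 × 𝒴) :
    relEntTerm (nbrRoot μ) (nbrRoot η) (u, v) =
      nbrRoot μ (u, v) * Real.log (margO μ v / margO η v) +
        nbrRoot μ (u, v) * Real.log (condRatio μ η (u, v)) := by
  rcases (nbrRoot_nonneg hμ (u, v)).eq_or_lt with h0 | h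
  · simp [relEntTerm, ← h0]
  have hratio : margO μ v / margO η v ≠ 0 :=
    div_ne_zero (margO_pos hμ h).ne' (margO_pos hη (nbrRoot_pos_of_nbrRoot_pos hη habs h)).ne'
  rw [relEntTerm, ← mul_add, ← Real.log_mul hratio (condRatio_ne_zero hμ hη habs _ h), condRatio,
    div_mul_div_comm, mul_comm (margO μ v), mul_comm (margO η v), condNbr_mul_margO hμ,
    condNbr_mul_margO hη]

lemma sum_relEntTerm_nbrRoot (hμsym : ∀ u v, nbrRoot μ (u, v) = nbrRoot μ (v, u))
    (hηsym : ∀ u v, nbrRoot η (u, v) = nbrRoot η (v, u)) :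
    ∑ p, relEntTerm (nbrRoot μ) (nbrRoot η) p =
      ∑ p, nbrRoot μ p * Real.log (marginalRatio μ η p) +
        ∑ p, nbrRoot μ p * Real.log (condRatio μ η p) := by
  have hswap : ∑ p, nbrRoot μ p * Real.log (marginalRatio μ η p) =
      ∑ p : (𝒳 × 𝒴) × (𝒳 × 𝒴), nbrRoot μ p * Real.log (margO μ p.2 / margO η p.2) := by
    rw [← (Equiv.prodComm _ _).sum_comp]
    refine Finset.sum_congr rfl fun p _ => ?_
    simp only [Equiv.prodComm_apply, Prod.swap, marginalRatio, marg1_eq_margO hμsym,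
      marg1_eq_margO hηsym, hμsym p.2 p.1]
  rw [hswap, ← Finset.sum_add_distrib]
  exact Finset.sum_congr rfl fun p _ => relEntTerm_nbrRoot_eq hμ hη habs p.1 p.2

end Ratios

lemma toReal_relEnt_nbrRoot (hμ : IsSizeBiasable μ) (hη : IsSizeBiasable η)
    (habs : ∀ τ, η τ = 0 → μ τ = 0) (hμsym : ∀ u v, nbrRoot μ (u, v) = nbrRoot μ (v, u))
    (hηsym : ∀ u v, nbrRoot η (u, v) = nbrRoot η (v, u)) :
    (relEnt (nbrRoot μ) (nbrRoot η)).toReal =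
      ∑ p, nbrRoot μ p * Real.log (marginalRatio μ η p) +
        ∑ p, nbrRoot μ p * Real.log (condRatio μ η p) := by
  have hμbar := hμ.nbrRoot_mem_stdSimplex
  have hbar := hη.nbrRoot_eq_zero habs
  rw [toReal_relEnt hμbar.1 (hμbar.2 ▸ hasSum_fintype _)
    (isSubPMF_of_mem_stdSimplex hη.nbrRoot_mem_stdSimplex) hbar (hasSum_fintype _).summable,
    tsum_fintype, sum_relEntTerm_nbrRoot hμ.nonneg hη.nonneg hbar hμsym hηsym]

end ChainRule

section ReferenceLaw

variable {𝒳 𝒴 : Type} {ν : 𝒳 → ℝ} {ξ : 𝒴 × 𝒴 → ℝ} {Q : ℕ → ℝ} {w : 𝒳 × 𝒴 × 𝒴 → ℝ}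

/-- The law `(a, y, y') ↦ ν a * ξ̄(y, y')` of the marks of a single neighbour under `eta1`. -/
def markLaw (ν : 𝒳 → ℝ) (ξ : 𝒴 × 𝒴 → ℝ) (s : 𝒳 × 𝒴 × 𝒴) : ℝ := ν s.1 * xiBar ξ s.2.1 s.2.2

lemma xiBar_comm (ξ : 𝒴 × 𝒴 → ℝ) (y y' : 𝒴) : xiBar ξ y y' = xiBar ξ y' y :=
  congrArg (· / 2) (add_comm _ _)

lemma markLaw_mem_stdSimplex [Fintype 𝒳] [Fintype 𝒴] (hν : ν ∈ stdSimplex ℝ 𝒳)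
    (hξ : ξ ∈ stdSimplex ℝ (𝒴 × 𝒴)) : markLaw ν ξ ∈ stdSimplex ℝ (𝒳 × 𝒴 × 𝒴) := by
  have hxiBar : ∑ y, ∑ y', xiBar ξ y y' = 1 := by
    have hsum : ∑ y, ∑ y', ξ (y, y') = 1 := by rw [← Fintype.sum_prod_type, hξ.2]
    simp only [xiBar, ← Finset.sum_div, Finset.sum_add_distrib]
    rw [Finset.sum_comm (f := fun y y' => ξ (y', y)), hsum]
    norm_num
  refine ⟨fun s => mul_nonneg (hν.1 _) (div_nonneg (add_nonneg (hξ.1 _) (hξ.1 _)) two_pos.le), ?_⟩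
  simp only [markLaw, Fintype.sum_prod_type, ← Finset.mul_sum, hxiBar, mul_one, hν.2]

lemma sum_marks_eq_sum_sum [Fintype 𝒳] [Fintype 𝒴] {A : Type*} [AddCommMonoid A]
    (F : 𝒳 × 𝒴 × 𝒴 → A) : ∑ s, F s = ∑ u : 𝒳 × 𝒴, ∑ y', F (u.1, u.2, y') := by
  rw [← (Equiv.prodAssoc 𝒳 𝒴 𝒴).sum_comp, Fintype.sum_prod_type]
  rfl

variable [DecidableEq 𝒳] [DecidableEq 𝒴]

lemma ordCoeff_eq_countPerms (m : Multiset (𝒳 × 𝒴 × 𝒴)) : ordCoeff m = m.countPerms := by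
  have hspec : (∏ s ∈ m.toFinset, (m.count s).factorial) * m.countPerms = m.card.factorial := by
    simpa [Multiset.countPerms, Finsupp.multinomial_eq] using
      Nat.multinomial_spec m.toFinsupp.support m.toFinsupp
  rw [ordCoeff, ← hspec]
  push_cast
  exact mul_div_cancel_left₀ _ (Finset.prod_ne_zero_iff.2 fun s _ => by positivity)

lemma eta1_eq_iidLaw (ν : 𝒳 → ℝ) (ξ : 𝒴 × 𝒴 → ℝ) (Q : ℕ → ℝ) :
    eta1 ν ξ Q = iidLaw ν Q fun _ => markLaw ν ξ := by
  funext τ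
  simp only [eta1, iidLaw, ordCoeff_eq_countPerms, mul_assoc]
  rfl

lemma edgeTilt_iidLaw (w : 𝒳 → 𝒳 × 𝒴 × 𝒴 → ℝ) (g : (𝒳 × 𝒴) × (𝒳 × 𝒴) → ℝ) :
    edgeTilt (iidLaw ν Q w) g = iidLaw ν Q fun x s => w x s * g (edgeMarks (x, s)) := by
  funext τ
  simp only [edgeTilt, iidLaw, Multiset.prod_map_mul, mul_assoc]

variable [Fintype 𝒳] [Fintype 𝒴]

lemma isSizeBiasable_iidLaw (hν : ν ∈ stdSimplex ℝ 𝒳) (hw : w ∈ stdSimplex ℝ (𝒳 × 𝒴 × 𝒴))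
    (hQ : IsSubPMF Q) {q : ℝ} (hq : HasSum (fun k : ℕ => k * Q k) q) (hqpos : 0 < q) :
    IsSizeBiasable (iidLaw ν Q fun _ => w) := by
  have hdeg := hasSum_iidLaw_mul_card hν.2 (fun _ => hw) hQ.nonneg hq
  exact ⟨(isSubPMF_iidLaw hν hQ (fun _ => hw.1) fun _ => hw.2.le).nonneg, hdeg.summable,
    hqpos.trans_eq hdeg.tsum_eq.symm⟩

lemma nbrRoot_iidLaw (hν : ∑ x, ν x = 1) (hw : w ∈ stdSimplex ℝ (𝒳 × 𝒴 × 𝒴))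
    (hQ : ∀ k, 0 ≤ Q k) {q : ℝ} (hq : HasSum (fun k : ℕ => k * Q k) q) (hq0 : q ≠ 0)
    (u v : 𝒳 × 𝒴) :
    nbrRoot (iidLaw ν Q fun _ => w) (u, v) = ν v.1 * w (u.1, u.2, v.2) := by
  have hmean : meanDeg (iidLaw ν Q fun _ => w) = q :=
    (hasSum_iidLaw_mul_card hν (fun _ => hw) hQ hq).tsum_eq
  rw [nbrRoot, hmean, (hasSum_iidLaw_mul_count hw hQ hq _).tsum_eq, mul_comm, mul_one_div,
    mul_div_cancel_right₀ _ hq0]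

section TiltMass

variable {μ η : T1 𝒳 𝒴 → ℝ}

lemma sum_mul_marginalRatio_le_one (hμ : IsSizeBiasable μ) (hν : ∑ x, ν x = 1)
    (hη : ∀ u v, nbrRoot η (u, v) = ν v.1 * w (u.1, u.2, v.2)) (x : 𝒳) :
    ∑ s, w s * marginalRatio μ η (edgeMarks (x, s)) ≤ 1 := by
  have hmarg (u : 𝒳 × 𝒴) : marg1 η u = ∑ y', w (u.1, u.2, y') := by
    simp_rw [marg1, hη, Fintype.sum_prod_type, ← Finset.mul_sum, ← Finset.sum_mul, hν, one_mul]
  calc ∑ s, w s * marginalRatio μ η (edgeMarks (x, s))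
      = ∑ u : 𝒳 × 𝒴, ∑ y', w (u.1, u.2, y') * (marg1 μ u / marg1 η u) := sum_marks_eq_sum_sum _
    _ = ∑ u, marg1 μ u * (marg1 η u / marg1 η u) :=
      Finset.sum_congr rfl fun u _ => by rw [← Finset.sum_mul, ← hmarg, mul_div_left_comm]
    _ ≤ ∑ u, marg1 μ u := Finset.sum_le_sum fun u _ =>
      mul_le_of_le_one_right (marg1_nonneg hμ.nonneg u) (div_self_le_one _)
    _ = 1 := (Fintype.sum_prod_type (nbrRoot μ)).symm.trans hμ.nbrRoot_mem_stdSimplex.2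

lemma mul_condRatio_le (hμ : ∀ τ, 0 ≤ μ τ) (hη0 : ∀ τ, 0 ≤ η τ) (hw : ∀ s, 0 ≤ w s)
    (hη : ∀ u v, nbrRoot η (u, v) = ν v.1 * w (u.1, u.2, v.2)) (u v : 𝒳 × 𝒴) :
    w (u.1, u.2, v.2) * condRatio μ η (u, v) ≤
      (∑ u' : 𝒳 × 𝒴, w (u'.1, u'.2, v.2)) * condNbr μ u v := by
  set D := ∑ u' : 𝒳 × 𝒴, w (u'.1, u'.2, v.2)
  have hbound : 0 ≤ D * condNbr μ u v :=
    mul_nonneg (Finset.sum_nonneg fun _ _ => hw _) (condNbr_nonneg hμ u v)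
  have hmarg : margO η v = ν v.1 * D := by simp_rw [margO, hη, ← Finset.mul_sum, D]
  by_cases hc : condNbr η u v = 0
  · simpa [condRatio, hc] using hbound
  have hν : ν v.1 ≠ 0 := by
    intro h0
    simp [condNbr, hmarg, h0] at hc
  have hfactor : w (u.1, u.2, v.2) = D * condNbr η u v := by
    have h := condNbr_mul_margO hη0 u v
    rw [hmarg, hη] at h
    exact mul_left_cancel₀ hν (by rw [← h]; ring)
  rw [hfactor, condRatio, mul_assoc, mul_div_cancel₀ _ hc]

lemma sum_mul_condRatio_le_one (hμ : ∀ τ, 0 ≤ μ τ) (hη0 : ∀ τ, 0 ≤ η τ)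
    (hw : w ∈ stdSimplex ℝ (𝒳 × 𝒴 × 𝒴))
    (hη : ∀ u v, nbrRoot η (u, v) = ν v.1 * w (u.1, u.2, v.2)) (x : 𝒳) :
    ∑ s, w s * condRatio μ η (edgeMarks (x, s)) ≤ 1 :=
  calc ∑ s, w s * condRatio μ η (edgeMarks (x, s))
      = ∑ y', ∑ u : 𝒳 × 𝒴, w (u.1, u.2, y') * condRatio μ η (u, (x, y')) := by
        rw [sum_marks_eq_sum_sum, Finset.sum_comm]
        rfl
    _ ≤ ∑ y', ∑ u, (∑ u' : 𝒳 × 𝒴, w (u'.1, u'.2, y')) * condNbr μ u (x, y') :=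
      Finset.sum_le_sum fun y' _ => Finset.sum_le_sum fun u _ =>
        mul_condRatio_le hμ hη0 hw.1 hη u (x, y')
    _ ≤ ∑ y', ∑ u' : 𝒳 × 𝒴, w (u'.1, u'.2, y') := Finset.sum_le_sum fun y' _ => by
      rw [← Finset.mul_sum]
      exact mul_le_of_le_one_right (Finset.sum_nonneg fun _ _ => hw.1 _) (sum_condNbr_le_one _)
    _ = 1 := by rw [Finset.sum_comm, ← sum_marks_eq_sum_sum, hw.2]

end TiltMass

section Eta1

variable (hν : ν ∈ stdSimplex ℝ 𝒳) (hξ : ξ ∈ stdSimplex ℝ (𝒴 × 𝒴)) (hQ : IsSubPMF Q)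

include hν hξ hQ

lemma isSubPMF_eta1 : IsSubPMF (eta1 ν ξ Q) := by
  have hw := markLaw_mem_stdSimplex hν hξ
  rw [eta1_eq_iidLaw]
  exact isSubPMF_iidLaw hν hQ (fun _ => hw.1) fun _ => hw.2.le

lemma isSubPMF_edgeTilt_eta1 {g : (𝒳 × 𝒴) × (𝒳 × 𝒴) → ℝ} (hg : ∀ p, 0 ≤ g p)
    (hg1 : ∀ x, ∑ s, markLaw ν ξ s * g (edgeMarks (x, s)) ≤ 1) :
    IsSubPMF (edgeTilt (eta1 ν ξ Q) g) := by
  rw [eta1_eq_iidLaw, edgeTilt_iidLaw]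
  exact isSubPMF_iidLaw hν hQ
    (fun _ _ => mul_nonneg ((markLaw_mem_stdSimplex hν hξ).1 _) (hg _)) hg1

variable {q : ℝ} (hq : HasSum (fun k : ℕ => k * Q k) q) (hqpos : 0 < q)

include hq hqpos

lemma isSizeBiasable_eta1 : IsSizeBiasable (eta1 ν ξ Q) :=
  eta1_eq_iidLaw ν ξ Q ▸ isSizeBiasable_iidLaw hν (markLaw_mem_stdSimplex hν hξ) hQ hq hqpos

lemma nbrRoot_eta1 (u v : 𝒳 × 𝒴) :
    nbrRoot (eta1 ν ξ Q) (u, v) = ν v.1 * markLaw ν ξ (u.1, u.2, v.2) := by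
  rw [eta1_eq_iidLaw]
  exact nbrRoot_iidLaw hν.2 (markLaw_mem_stdSimplex hν hξ) hQ.nonneg hq hqpos.ne' u v

lemma nbrRoot_eta1_comm (u v : 𝒳 × 𝒴) :
    nbrRoot (eta1 ν ξ Q) (u, v) = nbrRoot (eta1 ν ξ Q) (v, u) := by
  rw [nbrRoot_eta1 hν hξ hQ hq hqpos, nbrRoot_eta1 hν hξ hQ hq hqpos, markLaw, markLaw,
    xiBar_comm ξ u.2 v.2, mul_left_comm]

variable {μ : T1 𝒳 𝒴 → ℝ} (hμ : IsSizeBiasable μ)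

include hμ

lemma isSubPMF_muCheck : IsSubPMF (muCheck ν ξ Q μ) := by
  rw [muCheck_eq_edgeTilt]
  exact isSubPMF_edgeTilt_eta1 hν hξ hQ
    (fun _ => div_nonneg (marg1_nonneg hμ.nonneg _)
      (marg1_nonneg (isSubPMF_eta1 hν hξ hQ).nonneg _))
    (sum_mul_marginalRatio_le_one hμ hν.2 (nbrRoot_eta1 hν hξ hQ hq hqpos))

lemma isSubPMF_muHat : IsSubPMF (muHat ν ξ Q μ) := by
  have hη := (isSubPMF_eta1 hν hξ hQ).nonneg
  rw [muHat_eq_edgeTilt]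
  exact isSubPMF_edgeTilt_eta1 hν hξ hQ
    (fun _ => div_nonneg (condNbr_nonneg hμ.nonneg _ _) (condNbr_nonneg hη _ _))
    (sum_mul_condRatio_le_one hμ.nonneg hη (markLaw_mem_stdSimplex hν hξ)
      (nbrRoot_eta1 hν hξ hQ hq hqpos))

end Eta1

end ReferenceLaw

/-- **Alternative form of the first term of the rate function (Proposition 5.5).**
If `μ` is a pmf on `T1` with mean degree `β ∈ (0, ∞)`, `η₁` is the law with degree
distribution `Q` and i.i.d. marks, `μ ≪ η₁`, and `μ̄^{1,o}` is symmetric, then, as an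
identity in `[0, ∞]`,
`H(μ ‖ η₁) − (β/2)·H(μ̄^{1,o} ‖ η̄₁^{1,o}) = (1/2)(H(μ ‖ μ̌) + H(μ ‖ μ̂))`:
`H(μ̄^{1,o} ‖ η̄₁^{1,o})` is finite, `H(μ ‖ η₁) = ∞` iff the right-hand side is `∞`,
and when `H(μ ‖ η₁) < ∞` the identity holds in `ℝ`. -/
theorem rate_function_alternative_form_depth_one
    {𝒳 𝒴 : Type} [Fintype 𝒳] [Fintype 𝒴] [DecidableEq 𝒳] [DecidableEq 𝒴]
    (ν : 𝒳 → ℝ) (hν0 : ∀ x, 0 ≤ ν x) (hν1 : ∑ x, ν x = 1)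
    (ξ : 𝒴 × 𝒴 → ℝ) (hξ0 : ∀ p, 0 ≤ ξ p) (hξ1 : ∑ p : 𝒴 × 𝒴, ξ p = 1)
    (Q : ℕ → ℝ) (hQ0 : ∀ k, 0 ≤ Q k) (hQ1 : HasSum Q 1)
    (hQm : Summable fun k : ℕ => (k : ℝ) * Q k)
    (hQpos : 0 < ∑' k : ℕ, (k : ℝ) * Q k)
    (μ : T1 𝒳 𝒴 → ℝ) (hμ0 : ∀ τ, 0 ≤ μ τ) (hμ1 : HasSum μ 1)
    (hβfin : Summable fun τ : T1 𝒳 𝒴 => μ τ * (deg τ : ℝ))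
    (hβpos : 0 < meanDeg μ)
    (habs : ∀ τ, eta1 ν ξ Q τ = 0 → μ τ = 0)
    (hsym : ∀ u v : 𝒳 × 𝒴, nbrRoot μ (u, v) = nbrRoot μ (v, u)) :
    relEnt (nbrRoot μ) (nbrRoot (eta1 ν ξ Q)) ≠ ⊤ ∧
      (relEnt μ (eta1 ν ξ Q) = ⊤ ↔
        (relEnt μ (muCheck ν ξ Q μ) + relEnt μ (muHat ν ξ Q μ)) / 2 = ⊤) ∧
      (relEnt μ (eta1 ν ξ Q) ≠ ⊤ →
        (relEnt μ (eta1 ν ξ Q)).toReal -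
            meanDeg μ / 2 * (relEnt (nbrRoot μ) (nbrRoot (eta1 ν ξ Q))).toReal =
          (1 / 2) *
            ((relEnt μ (muCheck ν ξ Q μ)).toReal + (relEnt μ (muHat ν ξ Q μ)).toReal)) := by
  have hν : ν ∈ stdSimplex ℝ 𝒳 := ⟨hν0, hν1⟩
  have hξ : ξ ∈ stdSimplex ℝ (𝒴 × 𝒴) := ⟨hξ0, hξ1⟩
  have hQ : IsSubPMF Q := ⟨hQ0, hQ1.summable, hQ1.tsum_eq.le⟩
  have hμ : IsSizeBiasable μ := ⟨hμ0, hβfin, hβpos⟩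
  have hη := isSizeBiasable_eta1 hν hξ hQ hQm.hasSum hQpos
  have hη1 := isSubPMF_eta1 hν hξ hQ
  have hcheck1 := isSubPMF_muCheck hν hξ hQ hQm.hasSum hQpos hμ
  have hhat1 := isSubPMF_muHat hν hξ hQ hQm.hasSum hQpos hμ
  have hbar := hη.nbrRoot_eq_zero habs
  have hcheck := marginalRatio_ne_zero hμ0 hη.nonneg hbar
  have hhat := condRatio_ne_zero hμ0 hη.nonneg hbar
  rw [muCheck_eq_edgeTilt] at hcheck1 ⊢
  rw [muHat_eq_edgeTilt] at hhat1 ⊢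
  refine ⟨hη.relEnt_nbrRoot_ne_top habs, ?_, fun hfin => ?_⟩
  · simp [ENNReal.div_eq_top, relEnt_edgeTilt_eq_top_iff hμ habs hcheck,
      relEnt_edgeTilt_eq_top_iff hμ habs hhat]
  · rw [toReal_relEnt_edgeTilt hμ habs hcheck hμ1 hη1 hcheck1 hfin,
      toReal_relEnt_edgeTilt hμ habs hhat hμ1 hη1 hhat1 hfin,
      toReal_relEnt_nbrRoot hμ hη habs hsym (nbrRoot_eta1_comm hν hξ hQ hQm.hasSum hQpos)]
    ring
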